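/- (Unified consensus error bound, fourth moment.) Under A1, A3, A4 with general constants σ₀, σ₁, and A7 with general constants σ̄₀, σ̄₁, if sup_{t≥1} γ_t ≤ ρ/c₃^{1/4} where c₃ := 864n(σ̄₁⁴ + 8L⁴), then for every t ≥ 0: E_t[‖Θ_o^{t+1}‖_F⁴] ≤ (1 − ρ/2)‖Θ_o^t‖_F⁴ + 54n²[(σ̄₀⁴ + 4ς⁴) + 8σ̄₁⁴‖θ̄^t − θ*‖⁴]·γ_{t+1}⁴/ρ³. -/

import Mathlib

open MeasureTheory Filter Matrix
open scoped BigOperators RealInnerProductSpace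

/-!
Stack the agents' iterates into one vector `x`, and let `D = 1 - (1/n) 11ᵀ` act on the blocks.
Since `D = U Uᵀ` is an orthogonal projection, `‖D x‖ = ‖Uᵀ x‖`, so the bound on `‖Uᵀ W U‖` says
that mixing contracts the disagreement `‖D x‖` by the factor `1 - ρ`. Convexity of `s ↦ s ^ 4` with
weights `1 - ρ` and `ρ` turns `((1 - ρ) ‖D x‖ + |γ| s) ^ 4` into
`(1 - ρ) ‖D x‖ ^ 4 + γ ^ 4 s ^ 4 / ρ ^ 3`. Because `D` kills constant stacks, `s` may be taken to be
the distance from the stochastic gradients to the constant stack of the consensus gradient `v θ̄`.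
Passing from `g i` to `G i (x i)`, then to `G i θ̄`, then to `v θ̄` splits it into noise, a multiple
of the disagreement, and heterogeneity. Only the noise is random given the past, and the step size
condition absorbs all multiples of `‖D x‖ ^ 4` into half of the contraction.
-/

section BlockAction

variable {ι κ ν E : Type*} [Fintype ι] [NormedAddCommGroup E] [NormedSpace ℝ E]

/-- The block action `A ⊗ id` of a real matrix on stacked vectors. Stacks are `PiLp 2` families, so
that their norm is the Frobenius norm of the matrix whose columns are the blocks. -/
def blockCLM [Fintype κ] (A : Matrix κ ι ℝ) :
    PiLp 2 (fun _ : ι => E) →L[ℝ] PiLp 2 (fun _ : κ => E) where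
  toFun x := WithLp.toLp 2 fun i => ∑ j, A i j • x j
  map_add' x y := by
    ext i
    simp only [PiLp.add_apply, smul_add, Finset.sum_add_distrib]
  map_smul' c x := by
    ext i
    simp only [PiLp.smul_apply, RingHom.id_apply, Finset.smul_sum, smul_comm c]
  cont := by fun_prop

variable [Fintype κ]

theorem blockCLM_apply (A : Matrix κ ι ℝ) (x : PiLp 2 (fun _ : ι => E)) (i : κ) :
    blockCLM A x i = ∑ j, A i j • x j := rfl

theorem blockCLM_mul [Fintype ν] (A : Matrix ν κ ℝ) (B : Matrix κ ι ℝ)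
    (x : PiLp 2 (fun _ : ι => E)) : blockCLM (A * B) x = blockCLM A (blockCLM B x) := by
  ext i
  simp only [blockCLM_apply, Matrix.mul_apply, Finset.sum_smul, Finset.smul_sum, mul_smul]
  exact Finset.sum_comm

theorem blockCLM_const {W : Matrix κ ι ℝ} (hW : ∀ i, ∑ j, W i j = 1) (v : E) :
    blockCLM W (WithLp.toLp 2 fun _ => v) = WithLp.toLp 2 fun _ => v := by
  ext i
  simp only [blockCLM_apply, ← Finset.sum_smul, hW, one_smul]

end BlockAction

section BlockNorm

open scoped Matrix.Norms.L2Operator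

variable {ι κ E : Type*} [Fintype ι] [Fintype κ] [NormedAddCommGroup E] [InnerProductSpace ℝ E]

theorem inner_blockCLM_left (A : Matrix κ ι ℝ) (x : PiLp 2 (fun _ : ι => E))
    (y : PiLp 2 (fun _ : κ => E)) : ⟪blockCLM A x, y⟫ = ⟪x, blockCLM Aᵀ y⟫ := by
  simp only [PiLp.inner_apply, blockCLM_apply, sum_inner, inner_sum, real_inner_smul_left,
    real_inner_smul_right, Matrix.transpose_apply]
  exact Finset.sum_comm

theorem sum_sq_norm_inner_block {σ : Type*} [Fintype σ] (b : OrthonormalBasis σ ℝ E)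
    (x : PiLp 2 (fun _ : ι => E)) :
    ∑ k, ‖WithLp.toLp 2 fun i => ⟪b k, x i⟫‖ ^ 2 = ‖x‖ ^ 2 := by
  simp only [PiLp.norm_sq_eq_of_L2, ← b.sum_sq_norm_inner_right]
  exact Finset.sum_comm

theorem norm_blockCLM_le_of_orthonormalBasis [DecidableEq ι] {σ : Type*} [Fintype σ]
    (b : OrthonormalBasis σ ℝ E) (A : Matrix κ ι ℝ) (x : PiLp 2 (fun _ : ι => E)) :
    ‖blockCLM A x‖ ≤ ‖A‖ * ‖x‖ := by
  have coord_le (k : σ) : ‖WithLp.toLp 2 fun i => ⟪b k, blockCLM A x i⟫‖ ≤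
      ‖A‖ * ‖WithLp.toLp 2 fun j => ⟪b k, x j⟫‖ := by
    have h := A.l2_opNorm_mulVec (WithLp.toLp 2 fun j => ⟪b k, x j⟫)
    simp only [blockCLM_apply, inner_sum, real_inner_smul_right]
    exact h
  have h : ‖blockCLM A x‖ ^ 2 ≤ (‖A‖ * ‖x‖) ^ 2 := by
    rw [mul_pow, ← sum_sq_norm_inner_block b, ← sum_sq_norm_inner_block b x, Finset.mul_sum]
    refine Finset.sum_le_sum fun k _ => ?_
    rw [← mul_pow]
    exact pow_le_pow_left₀ (norm_nonneg _) (coord_le k) 2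
  exact le_of_sq_le_sq h (by positivity)

theorem norm_blockCLM_le [DecidableEq ι] (A : Matrix κ ι ℝ) (x : PiLp 2 (fun _ : ι => E)) :
    ‖blockCLM A x‖ ≤ ‖A‖ * ‖x‖ := by
  let S := Submodule.span ℝ (Set.range x)
  have : FiniteDimensional ℝ S := FiniteDimensional.span_of_finite ℝ (Set.finite_range x)
  obtain ⟨y, hy⟩ : ∃ y : PiLp 2 (fun _ : ι => S), ∀ i, (y i : E) = x i :=
    ⟨WithLp.toLp 2 fun i => ⟨x i, Submodule.subset_span ⟨i, rfl⟩⟩, fun _ => rfl⟩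
  have h := norm_blockCLM_le_of_orthonormalBasis (stdOrthonormalBasis ℝ S) A y
  simpa only [PiLp.norm_eq_of_L2, blockCLM_apply, Submodule.coe_norm, Submodule.coe_sum,
    Submodule.coe_smul, hy] using h

end BlockNorm

section Disagreement

variable {ι E : Type*} [Fintype ι] [NormedAddCommGroup E] [NormedSpace ℝ E]

/-- The average of the blocks, written `θ̄` when the blocks are the agents' iterates. It is `0` for
an empty family. -/
noncomputable def blockMean (x : PiLp 2 (fun _ : ι => E)) : E := (Fintype.card ι : ℝ)⁻¹ • ∑ i, x i

/-- The deviations of the blocks from their average, the matrix `Θ_o` of the paper, encoded as the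
block action of `1 - (1/n) 11ᵀ`. Hence `‖disagreement x‖` is the consensus error `‖Θ_o‖_F`. -/
noncomputable def disagreement [DecidableEq ι] :
    PiLp 2 (fun _ : ι => E) →L[ℝ] PiLp 2 (fun _ : ι => E) :=
  blockCLM (1 - (Fintype.card ι : ℝ)⁻¹ • Matrix.of fun _ _ => 1)

variable [DecidableEq ι]

theorem disagreement_apply (x : PiLp 2 (fun _ : ι => E)) (i : ι) :
    disagreement x i = x i - blockMean x := by
  simp [disagreement, blockCLM_apply, blockMean, Matrix.one_apply, sub_smul,
    Finset.sum_sub_distrib, Finset.smul_sum]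

theorem disagreement_const (v : E) : disagreement (WithLp.toLp 2 fun _ : ι => v) = 0 := by
  ext i
  have : Nonempty ι := ⟨i⟩
  simp [disagreement_apply, blockMean, ← Nat.cast_smul_eq_nsmul ℝ, smul_smul]

theorem eq_disagreement_add_const (x : PiLp 2 (fun _ : ι => E)) :
    x = disagreement x + WithLp.toLp 2 fun _ => blockMean x := by
  ext i
  simp only [PiLp.add_apply, disagreement_apply, sub_add_cancel]

theorem disagreement_disagreement (x : PiLp 2 (fun _ : ι => E)) :
    disagreement (disagreement x) = disagreement x := by
  conv_rhs => rw [eq_disagreement_add_const x, map_add, disagreement_const, add_zero]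

end Disagreement

section DisagreementNorm

open scoped Matrix.Norms.L2Operator

variable {ι κ E : Type*} [Fintype ι] [Fintype κ] [DecidableEq ι] [NormedAddCommGroup E]
  [InnerProductSpace ℝ E]

theorem norm_disagreement_sq (x : PiLp 2 (fun _ : ι => E)) :
    ‖disagreement x‖ ^ 2 = ⟪x, disagreement x⟫ := by
  have symm : (1 - (Fintype.card ι : ℝ)⁻¹ • Matrix.of fun _ _ => 1 : Matrix ι ι ℝ)ᵀ =
      1 - (Fintype.card ι : ℝ)⁻¹ • Matrix.of fun _ _ => 1 := by
    ext i j
    simp [Matrix.one_apply, eq_comm]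
  rw [← real_inner_self_eq_norm_sq]
  nth_rw 1 [disagreement]
  rw [inner_blockCLM_left, symm, ← disagreement, disagreement_disagreement]

theorem norm_disagreement_le (x : PiLp 2 (fun _ : ι => E)) : ‖disagreement x‖ ≤ ‖x‖ := by
  have h : ‖disagreement x‖ ^ 2 ≤ ‖x‖ * ‖disagreement x‖ :=
    (norm_disagreement_sq x).trans_le (real_inner_le_norm _ _)
  nlinarith [norm_nonneg x, norm_nonneg (disagreement x)]

theorem norm_disagreement_eq_norm_blockCLM_transpose {U : Matrix ι κ ℝ}
    (hU : 1 - (Fintype.card ι : ℝ)⁻¹ • Matrix.of (fun _ _ => (1 : ℝ)) = U * Uᵀ)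
    (x : PiLp 2 (fun _ : ι => E)) : ‖disagreement x‖ = ‖blockCLM Uᵀ x‖ := by
  refine (sq_eq_sq₀ (norm_nonneg _) (norm_nonneg _)).1 ?_
  rw [norm_disagreement_sq, disagreement, hU, blockCLM_mul,
    ← real_inner_self_eq_norm_sq (blockCLM _ x), inner_blockCLM_left, transpose_transpose]

theorem norm_disagreement_blockCLM_le [DecidableEq κ] {W : Matrix ι ι ℝ} {U : Matrix ι κ ℝ}
    (hW : ∀ i, ∑ j, W i j = 1)
    (hU : 1 - (Fintype.card ι : ℝ)⁻¹ • Matrix.of (fun _ _ => (1 : ℝ)) = U * Uᵀ)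
    (x : PiLp 2 (fun _ : ι => E)) :
    ‖disagreement (blockCLM W x)‖ ≤ ‖Uᵀ * W * U‖ * ‖disagreement x‖ := by
  have hWx : disagreement (blockCLM W x) = disagreement (blockCLM W (disagreement x)) := by
    conv_lhs => rw [eq_disagreement_add_const x, map_add, map_add, blockCLM_const hW,
      disagreement_const, add_zero]
  calc ‖disagreement (blockCLM W x)‖
      = ‖blockCLM (Uᵀ * W * U) (blockCLM Uᵀ x)‖ := by
        rw [hWx, norm_disagreement_eq_norm_blockCLM_transpose hU, disagreement, hU]
        simp only [blockCLM_mul]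
    _ ≤ ‖Uᵀ * W * U‖ * ‖blockCLM Uᵀ x‖ := norm_blockCLM_le _ _
    _ = ‖Uᵀ * W * U‖ * ‖disagreement x‖ := by
        rw [norm_disagreement_eq_norm_blockCLM_transpose hU]

theorem norm_disagreement_sub_smul_le (y g : PiLp 2 (fun _ : ι => E)) (γ : ℝ) (v : E) :
    ‖disagreement (y - γ • g)‖ ≤
      ‖disagreement y‖ + |γ| * ‖g - WithLp.toLp 2 fun _ => v‖ := by
  have hg : disagreement g = disagreement (g - WithLp.toLp 2 fun _ => v) := by
    rw [map_sub, disagreement_const, sub_zero]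
  rw [map_sub, map_smul, hg]
  refine (norm_sub_le _ _).trans ?_
  rw [norm_smul, Real.norm_eq_abs]
  gcongr
  exact norm_disagreement_le _

end DisagreementNorm

section Powers

variable {ι E : Type*} [Fintype ι] [SeminormedAddCommGroup E]

theorem norm_pow_four_le_card_mul_sum (x : PiLp 2 (fun _ : ι => E)) :
    ‖x‖ ^ 4 ≤ Fintype.card ι * ∑ i, ‖x i‖ ^ 4 := by
  have h := sq_sum_le_card_mul_sum_sq (s := Finset.univ) (f := fun i => ‖x i‖ ^ 2)
  rw [← PiLp.norm_sq_eq_of_L2] at h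
  simpa only [← pow_mul, Nat.reduceMul, Finset.card_univ] using h

theorem sum_norm_pow_four_le (x : PiLp 2 (fun _ : ι => E)) : ∑ i, ‖x i‖ ^ 4 ≤ ‖x‖ ^ 4 := by
  have h := Finset.sum_sq_le_sq_sum_of_nonneg (s := Finset.univ) (f := fun i => ‖x i‖ ^ 2)
    fun i _ => sq_nonneg _
  rw [← PiLp.norm_sq_eq_of_L2] at h
  simpa only [← pow_mul, Nat.reduceMul] using h

theorem norm_sub_pow_four_le (a b c : E) : ‖a - c‖ ^ 4 ≤ 8 * (‖a - b‖ ^ 4 + ‖b - c‖ ^ 4) := by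
  calc ‖a - c‖ ^ 4 ≤ (‖a - b‖ + ‖b - c‖) ^ 4 := by
        gcongr
        exact norm_sub_le_norm_sub_add_norm_sub a b c
    _ ≤ 2 ^ (4 - 1) * (‖a - b‖ ^ 4 + ‖b - c‖ ^ 4) := add_pow_le (norm_nonneg _) (norm_nonneg _) 4
    _ = 8 * (‖a - b‖ ^ 4 + ‖b - c‖ ^ 4) := by norm_num

theorem norm_sub_pow_four_le_of_bounds {g p q v : E} {r s : ℝ} (hpq : ‖p - q‖ ≤ r)
    (hqv : ‖q - v‖ ≤ s) : ‖g - v‖ ^ 4 ≤ 8 * ‖g - p‖ ^ 4 + 64 * (r ^ 4 + s ^ 4) := by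
  calc ‖g - v‖ ^ 4 ≤ 8 * (‖g - p‖ ^ 4 + 8 * (‖p - q‖ ^ 4 + ‖q - v‖ ^ 4)) := by
        grw [norm_sub_pow_four_le g p v, norm_sub_pow_four_le p q v]
    _ ≤ 8 * (‖g - p‖ ^ 4 + 8 * (r ^ 4 + s ^ 4)) := by gcongr
    _ = 8 * ‖g - p‖ ^ 4 + 64 * (r ^ 4 + s ^ 4) := by ring

theorem convex_combination_pow_succ_le {ρ a b : ℝ} (hρ0 : 0 < ρ) (hρ1 : ρ ≤ 1) (ha : 0 ≤ a)
    (hb : 0 ≤ b) (k : ℕ) :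
    ((1 - ρ) * a + b) ^ (k + 1) ≤ (1 - ρ) * a ^ (k + 1) + b ^ (k + 1) / ρ ^ k := by
  have h := (convexOn_pow (𝕜 := ℝ) (k + 1)).2 (Set.mem_Ici.2 ha)
    (Set.mem_Ici.2 (div_nonneg hb hρ0.le)) (sub_nonneg.2 hρ1) hρ0.le (sub_add_cancel 1 ρ)
  have hb' : ρ * (b / ρ) ^ (k + 1) = b ^ (k + 1) / ρ ^ k := by
    rw [div_pow, pow_succ' ρ]
    field_simp
  simpa only [smul_eq_mul, mul_div_cancel₀ b hρ0.ne', hb'] using h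

theorem mul_pow_le_pow_of_le_div_rpow {c γ ρ : ℝ} {k : ℕ} (hk : k ≠ 0) (hc : 0 ≤ c) (hγ : 0 ≤ γ)
    (hρ : 0 ≤ ρ) (h : γ ≤ ρ / c ^ (1 / (k : ℝ))) : c * γ ^ k ≤ ρ ^ k := by
  have hroot : (c ^ (1 / (k : ℝ))) ^ k = c := by rw [one_div, Real.rpow_inv_natCast_pow hc hk]
  have hroot_mul : γ * c ^ (1 / (k : ℝ)) ≤ ρ := mul_le_of_le_div₀ hρ (by positivity) h
  calc c * γ ^ k = (γ * c ^ (1 / (k : ℝ))) ^ k := by rw [mul_pow, hroot, mul_comm]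
    _ ≤ ρ ^ k := by gcongr

end Powers

section Descent

variable {ι E : Type*} [Fintype ι] [DecidableEq ι] [NormedAddCommGroup E]

section NormedSpace

variable [NormedSpace ℝ E]

theorem sum_norm_sub_pow_four_le_of_lipschitz {L ς : ℝ} {G : ι → E → E} {v : E → E}
    (hlip : ∀ i x y, ‖G i x - G i y‖ ≤ L * ‖x - y‖) (hhet : ∀ i x, ‖v x - G i x‖ ≤ ς)
    (x g : PiLp 2 (fun _ : ι => E)) :
    ∑ i, ‖g i - v (blockMean x)‖ ^ 4 ≤ 8 * ∑ i, ‖g i - G i (x i)‖ ^ 4 +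
      64 * (L ^ 4 * ‖disagreement x‖ ^ 4 + Fintype.card ι * ς ^ 4) := by
  have agent_le (i : ι) : ‖g i - v (blockMean x)‖ ^ 4 ≤ 8 * ‖g i - G i (x i)‖ ^ 4 +
      64 * (L ^ 4 * ‖disagreement x i‖ ^ 4 + ς ^ 4) := by
    rw [← mul_pow, disagreement_apply]
    exact norm_sub_pow_four_le_of_bounds (hlip i _ _) ((norm_sub_rev _ _).trans_le (hhet i _))
  calc ∑ i, ‖g i - v (blockMean x)‖ ^ 4
      ≤ ∑ i, (8 * ‖g i - G i (x i)‖ ^ 4 + 64 * (L ^ 4 * ‖disagreement x i‖ ^ 4 + ς ^ 4)) :=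
        Finset.sum_le_sum fun i _ => agent_le i
    _ = 8 * ∑ i, ‖g i - G i (x i)‖ ^ 4 +
          64 * (L ^ 4 * ∑ i, ‖disagreement x i‖ ^ 4 + Fintype.card ι * ς ^ 4) := by
        simp only [Finset.sum_add_distrib, ← Finset.mul_sum, Finset.sum_const, Finset.card_univ,
          nsmul_eq_mul]
    _ ≤ _ := by
        grw [sum_norm_pow_four_le (disagreement x)]

theorem sum_noise_level_le {b : ℝ} (a : ℝ) (hb : 0 ≤ b) (x : PiLp 2 (fun _ : ι => E)) (y : E) :
    ∑ i, (a + b * ‖x i - y‖ ^ 4) ≤ Fintype.card ι * a +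
      8 * b * (‖disagreement x‖ ^ 4 + Fintype.card ι * ‖blockMean x - y‖ ^ 4) := by
  calc ∑ i, (a + b * ‖x i - y‖ ^ 4)
      ≤ ∑ i, (a + b * (8 * (‖disagreement x i‖ ^ 4 + ‖blockMean x - y‖ ^ 4))) := by
        gcongr with i
        rw [disagreement_apply]
        exact norm_sub_pow_four_le _ _ _
    _ = Fintype.card ι * a +
          8 * b * (∑ i, ‖disagreement x i‖ ^ 4 + Fintype.card ι * ‖blockMean x - y‖ ^ 4) := by
        simp only [Finset.sum_add_distrib, ← Finset.mul_sum, Finset.sum_const, Finset.card_univ,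
          nsmul_eq_mul]
        ring
    _ ≤ _ := by
        grw [sum_norm_pow_four_le (disagreement x)]

end NormedSpace

variable [InnerProductSpace ℝ E]

theorem norm_disagreement_step_pow_four_le {ρ : ℝ} (γ : ℝ) (hρ0 : 0 < ρ) (hρ1 : ρ ≤ 1)
    {x y : PiLp 2 (fun _ : ι => E)} (hxy : ‖disagreement y‖ ≤ (1 - ρ) * ‖disagreement x‖)
    (g : PiLp 2 (fun _ : ι => E)) (v : E) :
    ‖disagreement (y - γ • g)‖ ^ 4 ≤ (1 - ρ) * ‖disagreement x‖ ^ 4 +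
      γ ^ 4 / ρ ^ 3 * (Fintype.card ι * ∑ i, ‖g i - v‖ ^ 4) := by
  calc ‖disagreement (y - γ • g)‖ ^ 4
      ≤ ((1 - ρ) * ‖disagreement x‖ + |γ| * ‖g - WithLp.toLp 2 fun _ => v‖) ^ 4 := by
        grw [norm_disagreement_sub_smul_le y g γ v, hxy]
    _ ≤ (1 - ρ) * ‖disagreement x‖ ^ 4 + (|γ| * ‖g - WithLp.toLp 2 fun _ => v‖) ^ 4 / ρ ^ 3 :=
        convex_combination_pow_succ_le hρ0 hρ1 (norm_nonneg _) (by positivity) 3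
    _ = (1 - ρ) * ‖disagreement x‖ ^ 4 +
          γ ^ 4 / ρ ^ 3 * ‖g - WithLp.toLp 2 fun _ => v‖ ^ 4 := by
        rw [mul_pow, Even.pow_abs (by decide)]
        ring
    _ ≤ _ := by
        grw [norm_pow_four_le_card_mul_sum (g - WithLp.toLp 2 fun _ => v)]
        simp only [PiLp.sub_apply]
        rfl

theorem norm_disagreement_step_pow_four_le_noise {L ς ρ : ℝ} (γ : ℝ) {G : ι → E → E} {v : E → E}
    (hρ0 : 0 < ρ) (hρ1 : ρ ≤ 1) (hlip : ∀ i x y, ‖G i x - G i y‖ ≤ L * ‖x - y‖)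
    (hhet : ∀ i x, ‖v x - G i x‖ ≤ ς) {x y : PiLp 2 (fun _ : ι => E)}
    (hxy : ‖disagreement y‖ ≤ (1 - ρ) * ‖disagreement x‖) (g : PiLp 2 (fun _ : ι => E)) :
    ‖disagreement (y - γ • g)‖ ^ 4 ≤
      ((1 - ρ + 64 * Fintype.card ι * L ^ 4 * (γ ^ 4 / ρ ^ 3)) * ‖disagreement x‖ ^ 4 +
        64 * Fintype.card ι ^ 2 * ς ^ 4 * (γ ^ 4 / ρ ^ 3)) +
        8 * Fintype.card ι * (γ ^ 4 / ρ ^ 3) * ∑ i, ‖g i - G i (x i)‖ ^ 4 := by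
  grw [norm_disagreement_step_pow_four_le γ hρ0 hρ1 hxy g (v (blockMean x)),
    sum_norm_sub_pow_four_le_of_lipschitz hlip hhet]
  exact le_of_eq (by ring)

end Descent

section Probability

variable {Ω ι E : Type*} {m mΩ : MeasurableSpace Ω} {P : Measure Ω}

theorem stronglyMeasurable_of_eval_piLp [Finite ι] {p : ENNReal} [Fact (1 ≤ p)]
    [NormedAddCommGroup E] {f : Ω → PiLp p (fun _ : ι => E)}
    (hf : ∀ i, StronglyMeasurable fun ω => f ω i) : StronglyMeasurable f := by
  classical
  have := Fintype.ofFinite ι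
  have hsum : f = fun ω => ∑ i, PiLp.single p i (f ω i) := by
    ext ω j
    simp
  rw [hsum]
  exact Finset.stronglyMeasurable_fun_sum _ fun i _ =>
    ((PiLp.continuous_toLp p _).comp
      (continuous_single (A := fun _ : ι => E) i)).comp_stronglyMeasurable (hf i)

theorem memLp_four_iff_integrable_norm_pow [NormedAddCommGroup E] {X : Ω → E}
    (hX : AEStronglyMeasurable X P) : MemLp X 4 P ↔ Integrable (fun ω => ‖X ω‖ ^ 4) P := by
  rw [← integrable_norm_rpow_iff hX (by norm_num) (by norm_num), ENNReal.toReal_ofNat]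
  norm_cast

theorem memLp_comp_of_lipschitzWith [NormedAddCommGroup E] [IsFiniteMeasure P] {F : Type*}
    [NormedAddCommGroup F] {p : ENNReal} {K : NNReal} {G : E → F} (hG : LipschitzWith K G)
    {X : Ω → E} (hX : MemLp X p P) : MemLp (fun ω => G (X ω)) p P := by
  have h := (hG.sub (LipschitzWith.const (G 0))).comp_memLp (sub_self _) hX
  simpa only [Function.comp_def, Pi.add_def, sub_add_cancel] using h.add (memLp_const (G 0))

theorem integrable_norm_disagreement_pow_four [Fintype ι] [DecidableEq ι]
    [NormedAddCommGroup E] [NormedSpace ℝ E] {x : Ω → PiLp 2 (fun _ : ι => E)}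
    (hx : MemLp x 4 P) : Integrable (fun ω => ‖disagreement (x ω)‖ ^ 4) P := by
  have hD := (disagreement (ι := ι) (E := E)).comp_memLp' hx
  exact (memLp_four_iff_integrable_norm_pow hD.1).1 hD

theorem memLp_of_gossip_recursion [Fintype ι] [NormedAddCommGroup E] [NormedSpace ℝ E]
    {p : ENNReal} {W : Matrix ι ι ℝ} {γ : ℕ → ℝ} {θ g : ℕ → ι → Ω → E}
    (hrec : ∀ t i ω, θ (t + 1) i ω = ∑ j, W i j • θ t j ω - γ (t + 1) • g t i ω)
    (hθ0 : ∀ i, MemLp (θ 0 i) p P) (hg : ∀ t i, MemLp (g t i) p P) (t : ℕ) (i : ι) :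
    MemLp (θ t i) p P := by
  induction t generalizing i with
  | zero => exact hθ0 i
  | succ t ih =>
    rw [funext (hrec t i)]
    exact (memLp_finsetSum Finset.univ fun j _ => (ih j).const_smul (W i j)).sub
      ((hg t i).const_smul (γ (t + 1)))

theorem condExp_le_add_mul_sum [Fintype ι] [IsFiniteMeasure P] (hm : m ≤ mΩ) {Y H : Ω → ℝ}
    {N B : ι → Ω → ℝ} {c : ℝ} (hc : 0 ≤ c) (hY : Integrable Y P) (hHm : StronglyMeasurable[m] H)
    (hH : Integrable H P) (hN : ∀ i, Integrable (N i) P)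
    (hYle : ∀ ω, Y ω ≤ H ω + c * ∑ i, N i ω) (hNB : ∀ i, P[N i | m] ≤ᵐ[P] B i) :
    P[Y | m] ≤ᵐ[P] fun ω => H ω + c * ∑ i, B i ω := by
  have hsum : Integrable (∑ i, N i) P := integrable_finsetSum' _ fun i _ => hN i
  have hmono : P[Y | m] ≤ᵐ[P] P[H + c • ∑ i, N i | m] :=
    condExp_mono hY (hH.add (hsum.smul c)) (Eventually.of_forall fun ω => by
      simpa [Finset.sum_apply] using hYle ω)
  filter_upwards [hmono, condExp_add hH (hsum.smul c) m, condExp_smul c (∑ i, N i) m,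
    condExp_finsetSum (s := Finset.univ) (fun i _ => hN i) m, ae_all_iff.2 hNB]
    with ω hY_le hadd hsmul hsum_eq hB_le
  calc P[Y | m] ω ≤ H ω + c * ∑ i, P[N i | m] ω := by
        rw [hadd, Pi.add_apply, hsmul, condExp_of_stronglyMeasurable hm hHm hH, Pi.smul_apply,
          hsum_eq, Finset.sum_apply, smul_eq_mul] at hY_le
        exact hY_le
    _ ≤ H ω + c * ∑ i, B i ω := by
        gcongr with i
        exact hB_le i

end Probability

section Recursion

variable {Ω ι E : Type*} [Fintype ι] [DecidableEq ι] [NormedAddCommGroup E] [InnerProductSpace ℝ E]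
  {m mΩ : MeasurableSpace Ω} {P : Measure Ω}

theorem condExp_norm_disagreement_step_pow_four_le [IsFiniteMeasure P] (hm : m ≤ mΩ)
    {L ς ρ a b : ℝ} (γ : ℝ) {W : Matrix ι ι ℝ} {G : ι → E → E} {v : E → E} {y : E}
    {x g : Ω → PiLp 2 (fun _ : ι => E)} (hρ0 : 0 < ρ) (hρ1 : ρ ≤ 1) (hb : 0 ≤ b)
    (hlip : ∀ i x y, ‖G i x - G i y‖ ≤ L * ‖x - y‖) (hhet : ∀ i x, ‖v x - G i x‖ ≤ ς)
    (hW : ∀ x : PiLp 2 (fun _ : ι => E),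
      ‖disagreement (blockCLM W x)‖ ≤ (1 - ρ) * ‖disagreement x‖)
    (hxm : StronglyMeasurable[m] x) (hx : MemLp x 4 P) (hg : MemLp g 4 P)
    (hnoise : ∀ i, P[fun ω => ‖g ω i - G i (x ω i)‖ ^ 4 | m] ≤ᵐ[P]
      fun ω => a + b * ‖x ω i - y‖ ^ 4) :
    P[fun ω => ‖disagreement (blockCLM W (x ω) - γ • g ω)‖ ^ 4 | m] ≤ᵐ[P] fun ω =>
      (1 - ρ) * ‖disagreement (x ω)‖ ^ 4 + γ ^ 4 / ρ ^ 3 *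
        (64 * Fintype.card ι * (L ^ 4 + b) * ‖disagreement (x ω)‖ ^ 4 +
          8 * Fintype.card ι ^ 2 * (a + 8 * ς ^ 4 + 8 * b * ‖blockMean (x ω) - y‖ ^ 4)) := by
  have hDm : StronglyMeasurable[m] fun ω => ‖disagreement (x ω)‖ ^ 4 :=
    (disagreement.continuous.comp_stronglyMeasurable hxm).norm.pow 4
  have hDx : Integrable (fun ω => ‖disagreement (x ω)‖ ^ 4) P :=
    integrable_norm_disagreement_pow_four hx
  have hy := ((blockCLM W).comp_memLp' hx).sub (hg.const_smul γ)
  have hstep : Integrable (fun ω => ‖disagreement (blockCLM W (x ω) - γ • g ω)‖ ^ 4) P :=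
    integrable_norm_disagreement_pow_four hy
  have hN (i : ι) : Integrable (fun ω => ‖g ω i - G i (x ω i)‖ ^ 4) P :=
    have hG := LipschitzWith.of_dist_le' fun p q => by simpa only [dist_eq_norm] using hlip i p q
    have hsub := (hg.eval_piLp i).sub (memLp_comp_of_lipschitzWith hG (hx.eval_piLp i))
    (memLp_four_iff_integrable_norm_pow hsub.1).1 hsub
  have h := condExp_le_add_mul_sum hm (by positivity) hstep
    ((hDm.const_mul _).add stronglyMeasurable_const) ((hDx.const_mul _).add (integrable_const _))
    hN (fun ω => norm_disagreement_step_pow_four_le_noise γ hρ0 hρ1 hlip hhet (hW (x ω)) (g ω))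
    hnoise
  filter_upwards [h] with ω hω
  grw [hω]
  simp only [Pi.add_apply]
  grw [sum_noise_level_le a hb (x ω) y]
  exact le_of_eq (by ring)

theorem absorb_quartic_step {N L ς ρ a b γ X R : ℝ} (hN : 0 ≤ N) (hρ : 0 < ρ) (ha : 0 ≤ a)
    (hb : 0 ≤ b) (hX : 0 ≤ X) (hR : 0 ≤ R) (hγ : 864 * N * (b + 8 * L ^ 4) * γ ^ 4 ≤ ρ ^ 4) :
    (1 - ρ) * X + γ ^ 4 / ρ ^ 3 * (64 * N * (L ^ 4 + b) * X +
        8 * N ^ 2 * (a + 8 * ς ^ 4 + 8 * b * R)) ≤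
      (1 - ρ / 2) * X + 54 * N ^ 2 * ((a + 4 * ς ^ 4) + 8 * b * R) * γ ^ 4 / ρ ^ 3 := by
  have hcoef : 64 * N * (L ^ 4 + b) * (γ ^ 4 / ρ ^ 3) ≤ ρ / 2 := by
    rw [← mul_div_assoc, div_le_iff₀ (by positivity)]
    have : 0 ≤ N * b * γ ^ 4 := by positivity
    have : 0 ≤ N * L ^ 4 * γ ^ 4 := by positivity
    linarith
  have hconst : 8 * N ^ 2 * (a + 8 * ς ^ 4 + 8 * b * R) ≤
      54 * N ^ 2 * ((a + 4 * ς ^ 4) + 8 * b * R) := by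
    have : 0 ≤ N ^ 2 * a := by positivity
    have : 0 ≤ N ^ 2 * ς ^ 4 := by positivity
    have : 0 ≤ N ^ 2 * (b * R) := by positivity
    linarith
  calc (1 - ρ) * X + γ ^ 4 / ρ ^ 3 * (64 * N * (L ^ 4 + b) * X +
        8 * N ^ 2 * (a + 8 * ς ^ 4 + 8 * b * R))
      = (1 - ρ) * X + 64 * N * (L ^ 4 + b) * (γ ^ 4 / ρ ^ 3) * X +
          8 * N ^ 2 * (a + 8 * ς ^ 4 + 8 * b * R) * (γ ^ 4 / ρ ^ 3) := by ring
    _ ≤ (1 - ρ) * X + ρ / 2 * X +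
          54 * N ^ 2 * ((a + 4 * ς ^ 4) + 8 * b * R) * (γ ^ 4 / ρ ^ 3) := by gcongr
    _ = _ := by ring

end Recursion

theorem stmt7_general {Ω ι κ E : Type*} [mΩ : MeasurableSpace Ω] {P : Measure Ω}
    [IsFiniteMeasure P] [Fintype ι] [DecidableEq ι] [Fintype κ] [DecidableEq κ]
    [NormedAddCommGroup E] [InnerProductSpace ℝ E]
    {n : ℕ} (hn : Fintype.card ι = n) {G : ι → E → E} {v : E → E} {L ς : ℝ}
    (hlip : ∀ i x y, ‖G i x - G i y‖ ≤ L * ‖x - y‖) (hhet : ∀ i x, ‖v x - G i x‖ ≤ ς)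
    {W : Matrix ι ι ℝ} (hWrow : ∀ i, ∑ j, W i j = 1) {U : Matrix ι κ ℝ} {ρ : ℝ} (hρ0 : 0 < ρ)
    (hUU : (1 : Matrix ι ι ℝ) - (n : ℝ)⁻¹ • Matrix.of (fun _ _ => (1 : ℝ)) = U * Uᵀ)
    (hUWU : ‖LinearMap.toContinuousLinearMap (Matrix.toEuclideanLin (Uᵀ * W * U))‖ ≤ 1 - ρ)
    {γ : ℕ → ℝ} {θ g : ℕ → ι → Ω → E}
    (hrec : ∀ t i ω, θ (t + 1) i ω = ∑ j, W i j • θ t j ω - γ (t + 1) • g t i ω)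
    {θb : ℕ → Ω → E} (hθb : ∀ t ω, θb t ω = (n : ℝ)⁻¹ • ∑ i, θ t i ω)
    {C : ℕ → Ω → ℝ} (hC : ∀ t ω, C t ω = ∑ i, ‖θ t i ω - θb t ω‖ ^ 2)
    {ℱ : ℕ → MeasurableSpace Ω} (hℱ : ∀ t, ℱ t ≤ mΩ)
    (hadapt : ∀ t i, StronglyMeasurable[ℱ t] (θ t i))
    (hθ0 : ∀ i, MemLp (θ 0 i) 4 P) (hg : ∀ t i, MemLp (g t i) 4 P) {y : E} {σ₀ σ₁ : ℝ}
    (hnoise : ∀ t i, P[fun ω => ‖g t i ω - G i (θ t i ω)‖ ^ 4 | ℱ t] ≤ᵐ[P]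
      fun ω => σ₀ ^ 4 + σ₁ ^ 4 * ‖θ t i ω - y‖ ^ 4)
    (hγ : ∀ t, 864 * (n : ℝ) * (σ₁ ^ 4 + 8 * L ^ 4) * γ (t + 1) ^ 4 ≤ ρ ^ 4) (t : ℕ) :
    P[fun ω => C (t + 1) ω ^ 2 | ℱ t] ≤ᵐ[P] fun ω => (1 - ρ / 2) * C t ω ^ 2 +
      54 * (n : ℝ) ^ 2 * ((σ₀ ^ 4 + 4 * ς ^ 4) + 8 * σ₁ ^ 4 * ‖θb t ω - y‖ ^ 4) *
        γ (t + 1) ^ 4 / ρ ^ 3 := by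
  subst hn
  let x (t : ℕ) (ω : Ω) : PiLp 2 (fun _ : ι => E) := WithLp.toLp 2 fun i => θ t i ω
  have hmean (t : ℕ) (ω : Ω) : blockMean (x t ω) = θb t ω := (hθb t ω).symm
  have hCx (t : ℕ) (ω : Ω) : C t ω ^ 2 = ‖disagreement (x t ω)‖ ^ 4 := by
    have h : C t ω = ‖disagreement (x t ω)‖ ^ 2 := by
      simp only [hC, PiLp.norm_sq_eq_of_L2, disagreement_apply, hmean, x]
    rw [h, ← pow_mul]
  have hx_succ (ω : Ω) :
      x (t + 1) ω = blockCLM W (x t ω) - γ (t + 1) • WithLp.toLp 2 fun i => g t i ω := by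
    ext i
    exact hrec t i ω
  have hW (z : PiLp 2 (fun _ : ι => E)) :
      ‖disagreement (blockCLM W z)‖ ≤ (1 - ρ) * ‖disagreement z‖ :=
    (norm_disagreement_blockCLM_le hWrow hUU z).trans
      (mul_le_mul_of_nonneg_right hUWU (norm_nonneg _))
  have hρ1 : ρ ≤ 1 := sub_nonneg.1 ((norm_nonneg _).trans hUWU)
  have hxm : StronglyMeasurable[ℱ t] (x t) := stronglyMeasurable_of_eval_piLp (hadapt t)
  have hx : MemLp (x t) 4 P := MemLp.of_eval_piLp (memLp_of_gossip_recursion hrec hθ0 hg t)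
  have hgt : MemLp (fun ω => WithLp.toLp 2 fun i => g t i ω) 4 P := MemLp.of_eval_piLp (hg t)
  have h := condExp_norm_disagreement_step_pow_four_le (hℱ t) (γ (t + 1)) hρ0 hρ1
    (by positivity) hlip hhet hW hxm hx hgt (hnoise t)
  simp only [hCx, hx_succ]
  filter_upwards [h] with ω hω
  rw [← hmean]
  grw [hω]
  exact absorb_quartic_step (Nat.cast_nonneg _) hρ0 (by positivity) (by positivity)
    (by positivity) (by positivity) (hγ t)

theorem stmt7
    {Ω : Type*} [mΩ : MeasurableSpace Ω] (P : Measure Ω) [IsProbabilityMeasure P]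
    (d n : ℕ) (hn : 0 < n)
    (fi : Fin n → EuclideanSpace ℝ (Fin d) → ℝ)
    (hfi : ∀ i, ContDiff ℝ 2 (fi i))
    (f : EuclideanSpace ℝ (Fin d) → ℝ)
    (hf : ∀ x, f x = (∑ i, fi i x) / n)
    (L ς : ℝ) (hL : 0 < L) (hς : 0 ≤ ς)
    (hlip : ∀ i x y, ‖gradient (fi i) x - gradient (fi i) y‖ ≤ L * ‖x - y‖)
    (hhet : ∀ i x, ‖gradient f x - gradient (fi i) x‖ ≤ ς)
    (W : Matrix (Fin n) (Fin n) ℝ)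
    (hWnn : ∀ i j, 0 ≤ W i j)
    (hWrow : ∀ i, ∑ j, W i j = 1) (hWcol : ∀ j, ∑ i, W i j = 1)
    (U : Matrix (Fin n) (Fin n) ℝ) (ρ : ℝ) (hρ0 : 0 < ρ) (hρ1 : ρ ≤ 1)
    (hUU : (1 : Matrix (Fin n) (Fin n) ℝ) - (n : ℝ)⁻¹ • Matrix.of (fun _ _ => (1 : ℝ)) = U * Uᵀ)
    (hUWU : ‖LinearMap.toContinuousLinearMap (Matrix.toEuclideanLin (Uᵀ * W * U))‖ ≤ 1 - ρ)
    (γ : ℕ → ℝ) (hγpos : ∀ t, 0 < γ t)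
    (θ : ℕ → Fin n → Ω → EuclideanSpace ℝ (Fin d))
    (g : ℕ → Fin n → Ω → EuclideanSpace ℝ (Fin d))
    (θ0 : Fin n → EuclideanSpace ℝ (Fin d)) (hθ0 : ∀ i ω, θ 0 i ω = θ0 i)
    (hrec : ∀ t i ω, θ (t + 1) i ω = ∑ j, W i j • θ t j ω - γ (t + 1) • g t i ω)
    (θb : ℕ → Ω → EuclideanSpace ℝ (Fin d))
    (hθb : ∀ t ω, θb t ω = (n : ℝ)⁻¹ • ∑ i, θ t i ω)
    (C : ℕ → Ω → ℝ)
    (hC : ∀ t ω, C t ω = ∑ i, ‖θ t i ω - θb t ω‖ ^ 2)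
    (ℱ : ℕ → MeasurableSpace Ω) (hℱ : ∀ t, ℱ t ≤ mΩ)
    (hadapt : ∀ t i, StronglyMeasurable[ℱ t] (θ t i))
    (hgmeas : ∀ t i, StronglyMeasurable (g t i))
    (hgL2 : ∀ t i, Integrable (fun ω => ‖g t i ω‖ ^ 2) P)
    (θstar : EuclideanSpace ℝ (Fin d)) (hmin : ∀ x, f θstar ≤ f x)
    (σ0 σ1 : ℝ) (hσ0 : 0 ≤ σ0) (hσ1 : 0 ≤ σ1)
    (hunb : ∀ t i, P[(fun ω => g t i ω) | ℱ t] =ᵐ[P] fun ω => gradient (fi i) (θ t i ω))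
    (hvar : ∀ t i, P[(fun ω => ‖g t i ω - gradient (fi i) (θ t i ω)‖ ^ 2) | ℱ t]
        ≤ᵐ[P] fun ω => σ0 ^ 2 + σ1 ^ 2 * ‖θ t i ω - θstar‖ ^ 2)
    (σb0 σb1 : ℝ) (hσb0 : 0 ≤ σb0) (hσb1 : 0 ≤ σb1)
    (hgL4 : ∀ t i, Integrable (fun ω => ‖g t i ω‖ ^ 4) P)
    (hvar4 : ∀ t i, P[(fun ω => ‖g t i ω - gradient (fi i) (θ t i ω)‖ ^ 4) | ℱ t]
        ≤ᵐ[P] fun ω => σb0 ^ 4 + σb1 ^ 4 * ‖θ t i ω - θstar‖ ^ 4)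
    (c3 : ℝ) (hc3 : c3 = 864 * (n : ℝ) * (σb1 ^ 4 + 8 * L ^ 4))
    (hstep : ∀ t : ℕ, 1 ≤ t → γ t ≤ ρ / c3 ^ ((1 : ℝ) / 4)) :
    ∀ t : ℕ, P[(fun ω => (C (t + 1) ω) ^ 2) | ℱ t] ≤ᵐ[P]
      fun ω => (1 - ρ / 2) * (C t ω) ^ 2
        + 54 * (n : ℝ) ^ 2 * ((σb0 ^ 4 + 4 * ς ^ 4) + 8 * σb1 ^ 4 * ‖θb t ω - θstar‖ ^ 4)
          * γ (t + 1) ^ 4 / ρ ^ 3 := by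
  exact stmt7_general (Fintype.card_fin n) hlip hhet hWrow hρ0 hUU hUWU hrec hθb hC hℱ hadapt
    (fun i => by simpa only [funext (hθ0 i)] using memLp_const (θ0 i))
    (fun t i => (memLp_four_iff_integrable_norm_pow (hgmeas t i).aestronglyMeasurable).2 (hgL4 t i))
    hvar4 fun t => hc3 ▸ mul_pow_le_pow_of_le_div_rpow four_ne_zero (hc3 ▸ by positivity)
      (hγpos (t + 1)).le hρ0.le (by exact_mod_cast hstep (t + 1) (Nat.le_add_left 1 t))
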